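/- Let M : ℝ → ℝ be continuous, let L > 0 and k > 0 (k plays the role of the flexural stiffness EJ), and set H(x) = ∫ₓ^L M(ξ) dξ. Assume |H(x)| < k for all x ∈ [0, L]. Define y(x) = −∫ₓ^L H(ξ)/√(k² − H(ξ)²) dξ. Then y(L) = 0, y is differentiable on [0, L] with y′(x) = H(x)/√(k² − H(x)²), in particular y′(L) = 0, and for every x ∈ [0, L] one has y′(x)/√(1 + y′(x)²) = H(x)/k; consequently (d/dx)(y′(x)/√(1 + y′(x)²)) = −M(x)/k on [0, L], i.e. y solves the exact (nonlinear curvature) rod deflection problem. -/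

import Mathlib

/-- The exact (nonlinear curvature) rod deflection problem:
`y(x) = -∫ₓ^L H(ξ)/√(k² - H(ξ)²) dξ` with `H(x) = ∫ₓ^L M(ξ) dξ` solves
`(d/dx)(y'/√(1+y'²)) = -M(x)/k` on `[0, L]` with `y(L) = 0`, `y'(L) = 0`. -/
theorem rod_exact_deflection_solution
    (M H y : ℝ → ℝ) (L k : ℝ) (hL : 0 < L) (hk : 0 < k)
    (hM : Continuous M)
    (hH : ∀ x, H x = ∫ ξ in x..L, M ξ)
    (hbound : ∀ x ∈ Set.Icc (0:ℝ) L, |H x| < k)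
    (hy : ∀ x, y x = -(∫ ξ in x..L, H ξ / Real.sqrt (k ^ 2 - (H ξ) ^ 2))) :
    y L = 0 ∧
    (∀ x ∈ Set.Icc (0:ℝ) L,
      HasDerivWithinAt y (H x / Real.sqrt (k ^ 2 - (H x) ^ 2)) (Set.Icc 0 L) x) ∧
    HasDerivWithinAt y 0 (Set.Icc 0 L) L ∧
    (∀ x ∈ Set.Icc (0:ℝ) L,
      (H x / Real.sqrt (k ^ 2 - (H x) ^ 2)) /
        Real.sqrt (1 + (H x / Real.sqrt (k ^ 2 - (H x) ^ 2)) ^ 2) = H x / k) ∧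
    (∀ x ∈ Set.Icc (0:ℝ) L,
      HasDerivWithinAt
        (fun t => (H t / Real.sqrt (k ^ 2 - (H t) ^ 2)) /
          Real.sqrt (1 + (H t / Real.sqrt (k ^ 2 - (H t) ^ 2)) ^ 2))
        (-(M x) / k) (Set.Icc 0 L) x) := by
  have hHd : ∀ x, HasDerivAt H (-(M x)) x := by
    intro x
    have h := intervalIntegral.integral_hasDerivAt_left (hM.intervalIntegrable x L)
      hM.stronglyMeasurable.stronglyMeasurableAtFilter hM.continuousAt
    have e : H = fun u => ∫ ξ in u..L, M ξ := funext hH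
    rw [e]
    exact h
  have hHc : Continuous H := continuous_iff_continuousAt.2 fun x => (hHd x).continuousAt
  have hpos : ∀ x ∈ Set.Icc (0:ℝ) L, 0 < k ^ 2 - (H x) ^ 2 := by
    intro x hx
    have h := abs_lt.1 (hbound x hx)
    nlinarith [h.1, h.2]
  have hgc : ∀ x ∈ Set.Icc (0:ℝ) L,
      ContinuousAt (fun ξ => H ξ / Real.sqrt (k ^ 2 - (H ξ) ^ 2)) x := by
    intro x hx
    refine ContinuousAt.div hHc.continuousAt ?_ (Real.sqrt_pos.2 (hpos x hx)).ne'
    exact Continuous.continuousAt (by fun_prop)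
  have hgm : Measurable (fun ξ => H ξ / Real.sqrt (k ^ 2 - (H ξ) ^ 2)) := by
    have := hHc.measurable
    fun_prop
  have hyd : ∀ x ∈ Set.Icc (0:ℝ) L,
      HasDerivAt y (H x / Real.sqrt (k ^ 2 - (H x) ^ 2)) x := by
    intro x hx
    have hi : IntervalIntegrable (fun ξ => H ξ / Real.sqrt (k ^ 2 - (H ξ) ^ 2))
        MeasureTheory.volume x L := by
      apply ContinuousOn.intervalIntegrable
      intro t ht
      rw [Set.uIcc_of_le hx.2] at ht
      exact (hgc t ⟨hx.1.trans ht.1, ht.2⟩).continuousWithinAt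
    have h := (intervalIntegral.integral_hasDerivAt_left hi
      hgm.stronglyMeasurable.stronglyMeasurableAtFilter (hgc x hx)).neg
    rw [neg_neg] at h
    have e : y = fun u => -(∫ ξ in u..L, H ξ / Real.sqrt (k ^ 2 - (H ξ) ^ 2)) := funext hy
    rw [e]
    exact h
  have hHL : H L = 0 := by rw [hH]; simp
  have hLm : L ∈ Set.Icc (0:ℝ) L := ⟨hL.le, le_rfl⟩
  have key : ∀ x ∈ Set.Icc (0:ℝ) L,
      (H x / Real.sqrt (k ^ 2 - (H x) ^ 2)) /
        Real.sqrt (1 + (H x / Real.sqrt (k ^ 2 - (H x) ^ 2)) ^ 2) = H x / k := by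
    intro x hx
    have hp := hpos x hx
    have hs := Real.sqrt_pos.2 hp
    have e : 1 + (H x / Real.sqrt (k ^ 2 - (H x) ^ 2)) ^ 2
        = (k / Real.sqrt (k ^ 2 - (H x) ^ 2)) ^ 2 := by
      rw [div_pow, div_pow, Real.sq_sqrt hp.le]
      field_simp
      ring
    rw [e, Real.sqrt_sq (by positivity)]
    field_simp
  refine ⟨by rw [hy]; simp, fun x hx => (hyd x hx).hasDerivWithinAt, ?_, key, ?_⟩
  · have h := (hyd L hLm).hasDerivWithinAt (s := Set.Icc 0 L)
    rw [hHL, zero_div] at h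
    exact h
  · intro x hx
    exact (((hHd x).div_const k).hasDerivWithinAt).congr key (key x hx)
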